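/- If the poset ([ℵ_ω]^ω, ⊆) has the weak Freese–Nation property and GCH holds, then there exists a saturated almost disjoint family in [ℵ_ω]^ω. -/

import Mathlib

universe u

open Cardinal

theorem aux_ext {α : Type u} (T : Set (Set α)) (hT : T.Countable) (X : Set α)
    (hX : ∀ T' : Finset (Set α), ↑T' ⊆ T → (X \ ⋃₀ (↑T' : Set (Set α))).Infinite) :
    ∃ Y, Y ⊆ X ∧ Y.Infinite ∧ ∀ t ∈ T, (Y ∩ t).Finite := by
  classical
  rcases T.eq_empty_or_nonempty with rfl | hne
  · refine ⟨X, subset_rfl, ?_, by simp⟩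
    simpa using hX ∅ (by simp)
  obtain ⟨t, rfl⟩ := hT.exists_eq_range hne
  obtain ⟨f, hf1, hf2⟩ := exists_seq_of_forall_finset_exists
    (fun p : ℕ × α => p.2 ∈ X ∧ ∀ i ≤ p.1, p.2 ∉ t i)
    (fun p q => p.1 < q.1 ∧ p.2 ≠ q.2) (by
      intro s hs
      obtain ⟨k, hk⟩ : ∃ k, ∀ p ∈ s, p.1 < k :=
        ⟨s.sup Prod.fst + 1, fun p hp => Nat.lt_succ_of_le (Finset.le_sup (f := Prod.fst) hp)⟩
      have h1 := hX ((Finset.range (k+1)).image t) (by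
        intro x hx
        simp only [Finset.coe_image, Set.mem_image] at hx
        obtain ⟨i, _, rfl⟩ := hx
        exact ⟨i, rfl⟩)
      obtain ⟨y, hy, hys⟩ := h1.exists_notMem_finset (s.image Prod.snd)
      refine ⟨(k, y), ⟨hy.1, ?_⟩, ?_⟩
      · intro i hi hyi
        refine hy.2 ⟨t i, ?_, hyi⟩
        simp only [Finset.coe_image, Set.mem_image]
        exact ⟨i, by simpa using Nat.lt_succ_of_le hi, rfl⟩
      · intro p hp
        refine ⟨hk p hp, ?_⟩
        rintro h
        exact hys (Finset.mem_image.2 ⟨p, hp, h⟩))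
  have hmono : StrictMono (fun n => (f n).1) := fun m n h => (hf2 m n h).1
  refine ⟨Set.range (fun n => (f n).2), ?_, ?_, ?_⟩
  · rintro _ ⟨n, rfl⟩; exact (hf1 n).1
  · apply Set.infinite_range_of_injective
    intro m n h
    by_contra hmn
    rcases lt_or_gt_of_ne hmn with h' | h'
    · exact (hf2 _ _ h').2 h
    · exact (hf2 _ _ h').2 h.symm
  · rintro _ ⟨i, rfl⟩
    apply ((Set.finite_lt_nat i).image (fun n => (f n).2)).subset
    rintro _ ⟨⟨n, rfl⟩, hn⟩
    refine ⟨n, ?_, rfl⟩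
    by_contra hni
    have hni' : i ≤ n := by simpa using hni
    exact (hf1 n).2 i (hni'.trans (hmono.le_apply)) hn

theorem aux_order {β : Type u} (h : #β ≤ Cardinal.aleph 1) :
    ∃ r : β → β → Prop, IsWellOrder β r ∧ ∀ x, {y | r y x}.Countable := by
  obtain ⟨r, wo, hr⟩ := Cardinal.exists_ord_eq β
  refine ⟨r, wo, fun x => ?_⟩
  have h1 := Cardinal.card_typein_lt (r := r) x hr
  have h2 : #{y | r y x} < Cardinal.aleph 1 := by
    refine lt_of_lt_of_le ?_ h
    exact h1
  rw [← Cardinal.le_aleph0_iff_set_countable]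
  rwa [← Cardinal.succ_aleph0, Order.lt_succ_iff] at h2

/-- Transfinite extension along a set of size at most aleph one. -/
theorem aux_step {α : Type u} (A C : Set (Set α)) (hC : #C ≤ Cardinal.aleph 1)
    (hA : ∀ a ∈ A, ∀ b ∈ A, a ≠ b → (a ∩ b).Finite)
    (hcnt : ∀ X ∈ C, (∃ a ∈ A, a ⊆ X) ∨ {a ∈ A | (X ∩ a).Infinite}.Countable) :
    ∃ B : Set (Set α), A ⊆ B ∧ (∀ b ∈ B, b ∈ A ∨ (b.Infinite ∧ ∃ X ∈ C, b ⊆ X)) ∧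
      (∀ a ∈ B, ∀ b ∈ B, a ≠ b → (a ∩ b).Finite) ∧
      ∀ X ∈ C, (∃ a ∈ B, a ⊆ X) ∨
        ∃ A' : Finset (Set α), ↑A' ⊆ B ∧ (X \ ⋃₀ ↑A').Finite := by
  classical
  obtain ⟨r, wo, hr⟩ := aux_order hC
  let Q : (ξ : C) → Set (Set α) → Set α → Prop := fun ξ D Y =>
    Y ⊆ ξ.1 ∧ Y.Infinite ∧ ∀ a ∈ A ∪ D, (Y ∩ a).Finite
  let G : (ξ : C) → Set (Set α) → Set (Set α) := fun ξ D =>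
    if h : ∃ Y, Q ξ D Y then {h.choose} else ∅
  have hG1 : ∀ ξ D, ∀ Y ∈ G ξ D, Q ξ D Y := by
    intro ξ D Y hY
    by_cases h : ∃ Y, Q ξ D Y
    · simp only [G, dif_pos h, Set.mem_singleton_iff] at hY
      subst hY; exact h.choose_spec
    · simp [G, dif_neg h] at hY
  have hG2 : ∀ ξ D, (G ξ D).Subsingleton := by
    intro ξ D
    by_cases h : ∃ Y, Q ξ D Y
    · simp [G, dif_pos h]
    · simp [G, dif_neg h]
  have hG3 : ∀ ξ D, (∃ Y, Q ξ D Y) → (G ξ D).Nonempty := by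
    intro ξ D h
    simp [G, dif_pos h]
  have wf : WellFounded r := wo.wf
  let y : C → Set (Set α) := wf.fix (fun ξ ih => G ξ (⋃ (η : C) (h : r η ξ), ih η h))
  have hy : ∀ ξ, y ξ = G ξ (⋃ (η : C) (_ : r η ξ), y η) := fun ξ => wf.fix_eq _ ξ
  have hyQ : ∀ ξ, ∀ Y ∈ y ξ, Q ξ (⋃ (η : C) (_ : r η ξ), y η) Y := by
    intro ξ Y hY
    rw [hy] at hY
    exact hG1 _ _ _ hY
  have hysub : ∀ ξ, (y ξ).Subsingleton := fun ξ => by rw [hy]; exact hG2 _ _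
  have hlt : ∀ ξ η, r η ξ → ∀ Y ∈ y ξ, ∀ Z ∈ y η, (Y ∩ Z).Finite := by
    intro ξ η h Y hY Z hZ
    refine (hyQ ξ Y hY).2.2 Z (Or.inr ?_)
    simp only [Set.mem_iUnion]
    exact ⟨η, h, hZ⟩
  refine ⟨A ∪ ⋃ ξ, y ξ, Set.subset_union_left, ?_, ?_, ?_⟩
  · rintro b (hb | hb)
    · exact Or.inl hb
    · obtain ⟨ξ, hξ⟩ := Set.mem_iUnion.1 hb
      exact Or.inr ⟨(hyQ ξ b hξ).2.1, ξ.1, ξ.2, (hyQ ξ b hξ).1⟩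
  · rintro a (ha | ha) b (hb | hb) hab
    · exact hA a ha b hb hab
    · obtain ⟨ξ, hξ⟩ := Set.mem_iUnion.1 hb
      rw [Set.inter_comm]
      exact (hyQ ξ b hξ).2.2 a (Or.inl ha)
    · obtain ⟨ξ, hξ⟩ := Set.mem_iUnion.1 ha
      exact (hyQ ξ a hξ).2.2 b (Or.inl hb)
    · obtain ⟨ξ, hξ⟩ := Set.mem_iUnion.1 ha
      obtain ⟨η, hη⟩ := Set.mem_iUnion.1 hb
      rcases trichotomous_of r ξ η with h | h | h
      · rw [Set.inter_comm]; exact hlt _ _ h _ hη _ hξ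
      · subst h; exact absurd (hysub _ hξ hη) hab
      · exact hlt _ _ h _ hξ _ hη
  · intro X hXC
    rcases hcnt X hXC with ⟨a, ha, haX⟩ | hc
    · exact Or.inl ⟨a, Or.inl ha, haX⟩
    let ξ : C := ⟨X, hXC⟩
    let D : Set (Set α) := ⋃ (η : C) (_ : r η ξ), y η
    have hDsub : D ⊆ ⋃ ξ, y ξ := by
      intro Z hZ
      simp only [D, Set.mem_iUnion] at hZ ⊢
      obtain ⟨η, _, h⟩ := hZ
      exact ⟨η, h⟩
    have hD : D.Countable :=
      Set.Countable.biUnion (hr ξ) (fun η _ => (hysub η).finite.countable)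
    by_cases hQ : ∃ Y, Q ξ D Y
    · obtain ⟨Y, hY⟩ := hG3 ξ D hQ
      have hY' : Y ∈ y ξ := by rw [hy]; exact hY
      exact Or.inl ⟨Y, Or.inr (Set.mem_iUnion.2 ⟨ξ, hY'⟩), (hyQ ξ Y hY').1⟩
    · right
      by_contra hcon
      push Not at hcon
      apply hQ
      obtain ⟨Y, h1, h2, h3⟩ := aux_ext ({a ∈ A | (X ∩ a).Infinite} ∪ D) (hc.union hD) X (by
        intro T' hT'
        apply hcon T'
        intro a ha
        rcases hT' ha with h | h
        · exact Or.inl h.1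
        · exact Or.inr (hDsub h))
      refine ⟨Y, h1, h2, ?_⟩
      rintro a (ha | ha)
      · by_cases hi : (X ∩ a).Infinite
        · exact h3 a (Or.inl ⟨ha, hi⟩)
        · exact (Set.not_infinite.1 hi).subset (Set.inter_subset_inter_left _ h1)
      · exact h3 a (Or.inr ha)

/-- Closure of a point under a set-valued operation with values of size at most aleph one. -/
theorem aux_closure {β : Type u} (P : Set β) (N : β → Set β)
    (hN : ∀ p ∈ P, N p ⊆ P ∧ #(N p) ≤ Cardinal.aleph 1) (x : β) (hx : x ∈ P) :
    ∃ C : Set β, x ∈ C ∧ C ⊆ P ∧ #C ≤ Cardinal.aleph 1 ∧ ∀ p ∈ C, N p ⊆ C := by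
  let L : ℕ → Set β := fun n => Nat.rec {x} (fun _ S => ⋃ p ∈ S, N p) n
  have hL : ∀ n : ℕ, L n ⊆ P ∧ #↥(L n) ≤ Cardinal.aleph 1 := by
    intro n
    induction n with
    | zero =>
      refine ⟨by simpa [L] using hx, ?_⟩
      have : #(↥(L 0)) = 1 := Cardinal.mk_singleton x
      rw [this]
      exact Cardinal.one_le_aleph0.trans (Cardinal.aleph0_le_aleph 1)
    | succ n ih =>
      have e : L (n+1) = ⋃ p ∈ L n, N p := rfl
      rw [e]
      refine ⟨Set.iUnion₂_subset fun p hp => (hN p (ih.1 hp)).1, ?_⟩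
      refine (Cardinal.mk_biUnion_le N (L n)).trans ?_
      refine (mul_le_mul' ih.2 (ciSup_le' fun p : ↥(L n) => (hN p.1 (ih.1 p.2)).2)).trans ?_
      exact (Cardinal.mul_eq_self (Cardinal.aleph0_le_aleph 1)).le
  refine ⟨⋃ n, L n, Set.mem_iUnion.2 ⟨0, rfl⟩, Set.iUnion_subset fun n => (hL n).1, ?_, ?_⟩
  · have := Cardinal.mk_iUnion_le_lift (f := L)
    simp only [Cardinal.mk_nat, Cardinal.lift_uzero, Cardinal.lift_aleph0] at this
    refine this.trans ?_
    refine (mul_le_mul' (Cardinal.aleph0_le_aleph 1) (ciSup_le' fun n => (hL n).2)).trans ?_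
    exact (Cardinal.mul_eq_self (Cardinal.aleph0_le_aleph 1)).le
  · intro p hp
    obtain ⟨n, hn⟩ := Set.mem_iUnion.1 hp
    intro q hq
    exact Set.mem_iUnion.2 ⟨n+1, Set.mem_biUnion hn hq⟩



/-- If GCH holds and `([ℵ_ω]^ω, ⊆)` has the weak Freese–Nation property, then
there is a saturated almost disjoint family in `[ℵ_ω]^ω`. -/
theorem stmt18 {α : Type u} (hα : Cardinal.mk α = Cardinal.aleph Ordinal.omega0)
    (hGCH : ∀ c : Cardinal.{u}, Cardinal.aleph0 ≤ c → 2 ^ c = Order.succ c)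
    (hwFN : ∃ F : Set α → Set (Set α),
      (∀ x : Set α, x.Countable → x.Infinite →
        (F x).Countable ∧ ∀ z ∈ F x, z.Countable ∧ z.Infinite) ∧
      (∀ x y : Set α, x.Countable → x.Infinite → y.Countable → y.Infinite →
        x ⊆ y → ∃ z ∈ F x ∩ F y, x ⊆ z ∧ z ⊆ y)) :
    ∃ A : Set (Set α),
      (∀ a ∈ A, a.Countable ∧ a.Infinite) ∧
      (∀ a ∈ A, ∀ b ∈ A, a ≠ b → (a ∩ b).Finite) ∧
      (∀ X : Set α, X.Countable → X.Infinite →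
        (∃ a ∈ A, a ⊆ X) ∨
        ∃ A' : Finset (Set α), ↑A' ⊆ A ∧ (X \ ⋃₀ ↑A').Finite) := by
  classical
  obtain ⟨F, hF1, hF2⟩ := hwFN
  let P : Set (Set α) := {x | x.Countable ∧ x.Infinite}
  let N : Set α → Set (Set α) := fun p => F p ∪ {q | q ⊆ p ∧ q.Infinite}
  have hN : ∀ p ∈ P, N p ⊆ P ∧ #(N p) ≤ Cardinal.aleph 1 := by
    rintro p ⟨hp1, hp2⟩
    constructor
    · rintro q (hq | hq)
      · exact (hF1 p hp1 hp2).2 q hq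
      · exact ⟨hp1.mono hq.1, hq.2⟩
    · have h1 : #(F p) ≤ Cardinal.aleph 1 :=
        ((Cardinal.le_aleph0_iff_set_countable).2 (hF1 p hp1 hp2).1).trans
          (Cardinal.aleph0_le_aleph 1)
      have h2 : #{q : Set α | q ⊆ p ∧ q.Infinite} ≤ Cardinal.aleph 1 := by
        refine (Cardinal.mk_le_mk_of_subset (t := 𝒫 p) (fun q hq => hq.1)).trans ?_
        rw [Cardinal.mk_powerset, ← Cardinal.succ_aleph0, ← hGCH _ le_rfl]
        exact Cardinal.power_le_power_left two_ne_zero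
          ((Cardinal.le_aleph0_iff_set_countable).2 hp1)
      refine (Cardinal.mk_union_le _ _).trans ((add_le_add h1 h2).trans ?_)
      exact (Cardinal.add_eq_self (Cardinal.aleph0_le_aleph 1)).le
  let Sat : Set (Set α) → Set α → Prop := fun A X => (∃ a ∈ A, a ⊆ X) ∨
        ∃ A' : Finset (Set α), ↑A' ⊆ A ∧ (X \ ⋃₀ (↑A' : Set (Set α))).Finite
  have hSatMono : ∀ A B X, A ⊆ B → Sat A X → Sat B X := by
    rintro A B X h (⟨a, ha, haX⟩ | ⟨A', h1, h2⟩)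
    · exact Or.inl ⟨a, h ha, haX⟩
    · exact Or.inr ⟨A', h1.trans h, h2⟩
  let Good : Set (Set α) × Set (Set α) → Prop := fun p =>
    p.1 ⊆ P ∧ (∀ s ∈ p.1, N s ⊆ p.1) ∧ p.2 ⊆ p.1 ∧
    (∀ a ∈ p.2, ∀ b ∈ p.2, a ≠ b → (a ∩ b).Finite) ∧ ∀ X ∈ p.1, Sat p.2 X
  obtain ⟨⟨S, A⟩, hmax⟩ := zorn_le₀ {p | Good p} (by
    intro c hc hchain
    refine ⟨(⋃ p ∈ c, p.1, ⋃ p ∈ c, p.2), ⟨?_, ?_, ?_, ?_, ?_⟩, ?_⟩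
    · exact Set.iUnion₂_subset fun p hp => (hc hp).1
    · intro s hs
      obtain ⟨p, hp, hs⟩ := Set.mem_iUnion₂.1 hs
      exact ((hc hp).2.1 s hs).trans (Set.subset_biUnion_of_mem (u := Prod.fst) hp)
    · intro a ha
      obtain ⟨p, hp, ha⟩ := Set.mem_iUnion₂.1 ha
      exact Set.mem_iUnion₂.2 ⟨p, hp, (hc hp).2.2.1 ha⟩
    · intro a ha b hb hab
      obtain ⟨p, hp, ha⟩ := Set.mem_iUnion₂.1 ha
      obtain ⟨q, hq, hb⟩ := Set.mem_iUnion₂.1 hb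
      rcases hchain.total hp hq with h | h
      · exact (hc hq).2.2.2.1 a (h.2 ha) b hb hab
      · exact (hc hp).2.2.2.1 a ha b (h.2 hb) hab
    · intro X hX
      obtain ⟨p, hp, hX⟩ := Set.mem_iUnion₂.1 hX
      exact hSatMono _ _ _ (Set.subset_biUnion_of_mem (u := Prod.snd) hp) ((hc hp).2.2.2.2 X hX)
    · intro p hp
      exact ⟨Set.subset_biUnion_of_mem (u := Prod.fst) hp,
        Set.subset_biUnion_of_mem (u := Prod.snd) hp⟩)
  obtain ⟨hSP, hSN, hAS, hAD, hSat⟩ := hmax.prop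
  simp only at hSP hSN hAS hAD hSat
  have hall : P ⊆ S := by
    intro x hx
    by_contra hxS
    obtain ⟨C, hxC, hCP, hCc, hCN⟩ := aux_closure P N hN x hx
    obtain ⟨B, hAB, hB1, hB2, hB3⟩ := aux_step A C hCc hAD (by
      intro X hXC
      by_cases hcon : ∃ a ∈ A, a ⊆ X
      · exact Or.inl hcon
      right
      obtain ⟨hX1, hX2⟩ := hCP hXC
      have key : ∀ z : Set α, z ∈ S → z ⊆ X →
          ∃ A' : Finset (Set α), ↑A' ⊆ A ∧ (z \ ⋃₀ (↑A' : Set (Set α))).Finite := by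
        intro z hz hzX
        rcases hSat z hz with ⟨a, ha, haz⟩ | h
        · exact absurd ⟨a, ha, haz.trans hzX⟩ hcon
        · exact h
      choose! K hK1 hK2 using key
      refine Set.Countable.mono (s₂ := ⋃ z ∈ F X, (↑(K z) : Set (Set α))) ?_
        (Set.Countable.biUnion (hF1 X hX1 hX2).1 fun z _ => (K z).countable_toSet)
      rintro a ⟨ha, hXa⟩
      have haS : a ∈ S := hAS ha
      have haXS : X ∩ a ∈ S := hSN a haS (Or.inr ⟨Set.inter_subset_right, hXa⟩)
      obtain ⟨z, ⟨hz1, hz2⟩, hz3, hz4⟩ := hF2 (X ∩ a) X (hSP haXS).1 hXa hX1 hX2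
        Set.inter_subset_left
      have hzS : z ∈ S := hSN _ haXS (Or.inl hz1)
      refine Set.mem_iUnion₂.2 ⟨z, hz2, ?_⟩
      by_contra haK
      apply hXa
      have hfin : (⋃ b ∈ K z, (a ∩ b)).Finite := by
        refine Set.Finite.biUnion (K z).finite_toSet fun b hb => ?_
        refine hAD a ha b (hK1 z hzS hz4 hb) ?_
        rintro rfl
        exact haK hb
      refine ((hK2 z hzS hz4).union hfin).subset ?_
      intro w hw
      by_cases h : w ∈ ⋃₀ (↑(K z) : Set (Set α))
      · obtain ⟨b, hb, hwb⟩ := h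
        exact Or.inr (Set.mem_iUnion₂.2 ⟨b, hb, hw.2, hwb⟩)
      · exact Or.inl ⟨hz3 hw, h⟩)
    have hgood : Good (S ∪ C, B) := by
      refine ⟨Set.union_subset hSP hCP, ?_, ?_, hB2, ?_⟩
      · rintro s (hs | hs)
        · exact (hSN s hs).trans Set.subset_union_left
        · exact (hCN s hs).trans Set.subset_union_right
      · intro b hb
        rcases hB1 b hb with h | ⟨h, X, hX, hbX⟩
        · exact Or.inl (hAS h)
        · exact Or.inr (hCN X hX (Or.inr ⟨hbX, h⟩))
      · rintro X (hX | hX)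
        · exact hSatMono _ _ _ hAB (hSat X hX)
        · exact hB3 X hX
    have := hmax.le_of_ge hgood ⟨Set.subset_union_left, hAB⟩
    exact hxS (this.1 (Or.inr hxC))
  exact ⟨A, fun a ha => hSP (hAS ha), hAD, fun X h1 h2 => hSat X (hall ⟨h1, h2⟩)⟩
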